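/- arXiv:1806.02246 — 3 statements merged into one kernel-verified Lean document; each statement's English description precedes it below -/
import Mathlib

section
/- (Core density-ratio bound for the penalty-perturbation method.) Fix constants C, ρ, B > 0, an integer V ≥ 1, an integer N ≥ 1, c₁ > 0, θ > 0 with 2c₁ < (B/C)(ρ/N + 2θV), and iterations t = 1,…,T with penalty parameters η_t ≥ θ and noise parameters α_t ≥ 0. Let ℒ : ℝ → ℝ be twice differentiable with |ℒ'(z)| ≤ 1 and 0 < ℒ''(z) ≤ c₁ for all z, and let R : ℝ^d → ℝ be twice continuously differentiable with ∇²R(f) ⪰ I for all f. Let D = ((x_n, y_n))_{n=1}^B and D̂ = ((x̂_n, ŷ_n))_{n=1}^B with x̂_n = x_n and ŷ_n = y_n for n ≥ 2, ‖x_n‖₂ ≤ 1, ‖x̂_1‖₂ ≤ 1, and y_n, ŷ_1 ∈ {−1, 1}. For each t let f(t), f(t−1), λ(t−1), g_1(t−1),…,g_V(t−1) ∈ ℝ^d be arbitrary (the same for both datasets), and define ε_t(D) = −(C/(2η_t V B))·Σ_{n=1}^B y_n ℒ'(y_n f(t)ᵀx_n)·x_n − (1/(2η_t V))·((ρ/N)∇R(f(t))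 + 2λ(t−1)) − (1/(2V))·Σ_{j=1}^V (2f(t) − f(t−1) − g_j(t−1)), and H_t(D) = (C/(2η_t V B))·Σ_{n=1}^B ℒ''(y_n f(t)ᵀx_n)·x_n x_nᵀ + (ρ/(2η_t V N))·∇²R(f(t)) + I, and analogously ε_t(D̂), H_t(D̂) with (x̂_n, ŷ_n). Then each H_t(D), H_t(D̂) is invertible with positive determinant and ∏_{t=1}^T exp(α_t(‖ε_t(D̂)‖₂ − ‖ε_t(D)‖₂)) · (det H_t(D) / det H_t(D̂)) ≤ exp( Σ_{t=1}^T C·(1.4·c₁ + α_t)/(η_t V B) ). -/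
open scoped RealInnerProductSpace BigOperators Matrix

/-!
Changing one record changes the empirical gradient by at most `2` in norm, which controls the noise
densities. For the Jacobians, the records common to both datasets, the regularizer and the identity
add up to a matrix `P ⪰ I` independent of the changed record; that record contributes a rank-one
term `s • v vᵀ` with `‖v‖ ≤ 1`. By the matrix determinant lemma this multiplies `det P` by
`1 + s * vᵀ P⁻¹ v`, a factor between `1` and `1 + s` because `P⁻¹ ⪯ I`. The ratio of determinants
is therefore at most `1 + s ≤ exp s`.
-/

section RankOneUpdate

open Matrix

lemma posSemidef_sum_smul_vecMulVec_self {ι m : Type*} [Finite m] {s : Finset ι} {a : ι → ℝ}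
    (ha : ∀ n ∈ s, 0 ≤ a n) (v : ι → m → ℝ) : (∑ n ∈ s, a n • vecMulVec (v n) (v n)).PosSemidef :=
  posSemidef_sum s fun n hn => (posSemidef_vecMulVec_self_star (v n)).smul (ha n hn)

lemma posDef_of_posSemidef_sub_one {m : Type*} [DecidableEq m] {P : Matrix m m ℝ}
    (hP : (P - 1).PosSemidef) : P.PosDef := by
  simpa only [sub_add_cancel] using PosDef.posSemidef_add hP PosDef.one

variable {m : Type*} [Fintype m] [DecidableEq m]

lemma det_add_smul_vecMulVec {K : Type*} [CommRing K] {P : Matrix m m K} (hP : IsUnit P.det)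
    (s : K) (u v : m → K) :
    (P + s • vecMulVec u v).det = P.det * (1 + s * (v ⬝ᵥ P⁻¹ *ᵥ u)) := by
  rw [← smul_vecMulVec, vecMulVec_eq Unit, det_add_replicateCol_mul_replicateRow hP,
    Matrix.mul_assoc, ← replicateCol_mulVec, mulVec_smul]
  simp [det_unique, replicateRow_mul_replicateCol_apply]

lemma dotProduct_inv_mulVec_le_dotProduct_self {P : Matrix m m ℝ} (hP : (P - 1).PosSemidef)
    (v : m → ℝ) : v ⬝ᵥ P⁻¹ *ᵥ v ≤ v ⬝ᵥ v := by
  set w := P⁻¹ *ᵥ v with hw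
  have hPw : P *ᵥ w = v := by
    rw [hw, mulVec_mulVec, mul_nonsing_inv _ (posDef_of_posSemidef_sub_one hP).det_pos.ne'.isUnit,
      one_mulVec]
  have w_le : w ⬝ᵥ w ≤ v ⬝ᵥ w := by
    have h := hP.dotProduct_mulVec_nonneg w
    rw [sub_mulVec, hPw, one_mulVec, dotProduct_sub, star_trivial, dotProduct_comm w v] at h
    exact sub_nonneg.mp h
  have diff_nonneg : 0 ≤ (v - w) ⬝ᵥ (v - w) := dotProduct_self_star_nonneg (v - w)
  rw [sub_dotProduct, dotProduct_sub, dotProduct_sub, dotProduct_comm w v] at diff_nonneg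
  linarith

lemma det_le_det_add_smul_vecMulVec_self {P : Matrix m m ℝ} (hP : P.PosDef) {s : ℝ} (hs : 0 ≤ s)
    (v : m → ℝ) : P.det ≤ (P + s • vecMulVec v v).det := by
  have form_nonneg : 0 ≤ v ⬝ᵥ P⁻¹ *ᵥ v := by
    simpa only [star_trivial] using hP.inv.posSemidef.dotProduct_mulVec_nonneg v
  rw [det_add_smul_vecMulVec hP.det_pos.ne'.isUnit]
  exact le_mul_of_one_le_right hP.det_pos.le (le_add_of_nonneg_right (mul_nonneg hs form_nonneg))

lemma det_add_smul_vecMulVec_self_le {P : Matrix m m ℝ} (hP : (P - 1).PosSemidef) {s : ℝ}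
    (hs : 0 ≤ s) (v : m → ℝ) :
    (P + s • vecMulVec v v).det ≤ P.det * (1 + s * (v ⬝ᵥ v)) := by
  have hdet : 0 < P.det := (posDef_of_posSemidef_sub_one hP).det_pos
  rw [det_add_smul_vecMulVec hdet.ne'.isUnit]
  gcongr
  exact dotProduct_inv_mulVec_le_dotProduct_self hP v

end RankOneUpdate

section EmpiricalLoss

open Matrix

variable {ι m : Type*} [Fintype ι] [Fintype m]

/-- The gradient at `w` of the empirical loss `∑ n, L (y n * ⟪w, x n⟫)` of a linear classifier on
the records `(x n, y n)`, where `φ` is the derivative of `L`. It is the part of the noise `ε` that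
depends on the dataset. -/
noncomputable def empiricalGradient (φ : ℝ → ℝ) (x : ι → EuclideanSpace ℝ m) (y : ι → ℝ)
    (w : EuclideanSpace ℝ m) : EuclideanSpace ℝ m :=
  ∑ n, (y n * φ (y n * ⟪w, x n⟫)) • x n

/-- The Hessian at `w` of the empirical loss `∑ n, L (y n * ⟪w, x n⟫)`, where `ψ` is the second
derivative of `L`. The labels are `±1`, so the factors `y n ^ 2 = 1` are left out. It is the part of
the Jacobian `H` that depends on the dataset. -/
noncomputable def empiricalHessian (ψ : ℝ → ℝ) (x : ι → EuclideanSpace ℝ m) (y : ι → ℝ)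
    (w : EuclideanSpace ℝ m) : Matrix m m ℝ :=
  ∑ n, ψ (y n * ⟪w, x n⟫) • vecMulVec (x n) (x n)

variable {φ ψ : ℝ → ℝ} {x xh : ι → EuclideanSpace ℝ m} {y yh : ι → ℝ} {n₀ : ι}

lemma dotProduct_self_eq_norm_sq (v : EuclideanSpace ℝ m) : v.ofLp ⬝ᵥ v.ofLp = ‖v‖ ^ 2 :=
  real_inner_self_eq_norm_sq v

lemma norm_mul_smul_le_one {E : Type*} [NormedAddCommGroup E] [NormedSpace ℝ E] {v : E} {a b : ℝ}
    (ha : |a| ≤ 1) (hb : |b| ≤ 1) (hv : ‖v‖ ≤ 1) : ‖(a * b) • v‖ ≤ 1 := by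
  rw [norm_smul, norm_mul]
  exact mul_le_one₀ (mul_le_one₀ ha (abs_nonneg b) hb) (norm_nonneg v) hv

lemma empiricalGradient_sub_of_agree (φ : ℝ → ℝ) (hagree : ∀ n ≠ n₀, xh n = x n ∧ yh n = y n)
    (w : EuclideanSpace ℝ m) :
    empiricalGradient φ x y w - empiricalGradient φ xh yh w =
      (y n₀ * φ (y n₀ * ⟪w, x n₀⟫)) • x n₀ - (yh n₀ * φ (yh n₀ * ⟪w, xh n₀⟫)) • xh n₀ := by
  rw [empiricalGradient, empiricalGradient, ← Finset.sum_sub_distrib]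
  refine Fintype.sum_eq_single n₀ fun n hn => ?_
  rw [(hagree n hn).1, (hagree n hn).2, sub_self]

lemma norm_empiricalGradient_sub_le_two (hφ : ∀ z, |φ z| ≤ 1)
    (hagree : ∀ n ≠ n₀, xh n = x n ∧ yh n = y n) (hx : ‖x n₀‖ ≤ 1) (hxh : ‖xh n₀‖ ≤ 1)
    (hy : |y n₀| ≤ 1) (hyh : |yh n₀| ≤ 1) (w : EuclideanSpace ℝ m) :
    ‖empiricalGradient φ x y w - empiricalGradient φ xh yh w‖ ≤ 2 := by
  rw [empiricalGradient_sub_of_agree φ hagree]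
  exact (norm_sub_le_of_le (norm_mul_smul_le_one hy (hφ _) hx)
    (norm_mul_smul_le_one hyh (hφ _) hxh)).trans_eq one_add_one_eq_two

lemma exists_posSemidef_empiricalHessian_eq_add_of_agree (hψ : ∀ z, 0 ≤ ψ z)
    (hagree : ∀ n ≠ n₀, xh n = x n ∧ yh n = y n) (w : EuclideanSpace ℝ m) :
    ∃ S : Matrix m m ℝ, S.PosSemidef ∧
      empiricalHessian ψ x y w = S + ψ (y n₀ * ⟪w, x n₀⟫) • vecMulVec (x n₀) (x n₀) ∧
      empiricalHessian ψ xh yh w = S + ψ (yh n₀ * ⟪w, xh n₀⟫) • vecMulVec (xh n₀) (xh n₀) := by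
  classical
  refine ⟨∑ n ∈ Finset.univ.erase n₀, ψ (y n * ⟪w, x n⟫) • vecMulVec (x n) (x n),
    posSemidef_sum_smul_vecMulVec_self (fun _ _ => hψ _) _,
    (Finset.sum_erase_add _ _ (Finset.mem_univ n₀)).symm, ?_⟩
  rw [empiricalHessian, ← Finset.sum_erase_add _ _ (Finset.mem_univ n₀)]
  congr 1
  refine Finset.sum_congr rfl fun n hn => ?_
  rw [(hagree n (Finset.ne_of_mem_erase hn)).1, (hagree n (Finset.ne_of_mem_erase hn)).2]

variable [DecidableEq m] {M : Matrix m m ℝ}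

lemma det_smul_empiricalHessian_add_pos (hψ : ∀ z, 0 ≤ ψ z) {k : ℝ} (hk : 0 ≤ k)
    (hM : (M - 1).PosSemidef) (x : ι → EuclideanSpace ℝ m) (y : ι → ℝ) (w : EuclideanSpace ℝ m) :
    0 < (k • empiricalHessian ψ x y w + M).det :=
  (PosDef.posSemidef_add ((posSemidef_sum_smul_vecMulVec_self (fun _ _ => hψ _) _).smul hk)
    (posDef_of_posSemidef_sub_one hM)).det_pos

lemma det_smul_empiricalHessian_add_le {c : ℝ} (hψ : ∀ z, 0 ≤ ψ z ∧ ψ z ≤ c) {k : ℝ} (hk : 0 ≤ k)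
    (hM : (M - 1).PosSemidef) (hagree : ∀ n ≠ n₀, xh n = x n ∧ yh n = y n) (hx : ‖x n₀‖ ≤ 1)
    (w : EuclideanSpace ℝ m) :
    (k • empiricalHessian ψ x y w + M).det ≤
      (k • empiricalHessian ψ xh yh w + M).det * (1 + k * c) := by
  obtain ⟨S, hS, hess_eq, hessh_eq⟩ :=
    exists_posSemidef_empiricalHessian_eq_add_of_agree (fun z => (hψ z).1) hagree w
  have hP : (k • S + M - 1).PosSemidef := by
    simpa only [add_sub_assoc] using (hS.smul hk).add hM
  have hP_posDef := posDef_of_posSemidef_sub_one hP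
  have split_rank_one (a : ℝ) (v : m → ℝ) : k • (S + a • vecMulVec v v) + M =
      k • S + M + (k * a) • vecMulVec v v := by
    rw [smul_add, smul_smul, add_right_comm]
  have factor_le : ψ (y n₀ * ⟪w, x n₀⟫) * ((x n₀).ofLp ⬝ᵥ (x n₀).ofLp) ≤ c := by
    rw [dotProduct_self_eq_norm_sq]
    exact (mul_le_of_le_one_right (hψ _).1 (pow_le_one₀ (norm_nonneg _) hx)).trans (hψ _).2
  have c_nonneg : 0 ≤ c := (hψ 0).1.trans (hψ 0).2
  rw [hess_eq, hessh_eq, split_rank_one, split_rank_one]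
  calc (k • S + M + (k * ψ (y n₀ * ⟪w, x n₀⟫)) • vecMulVec (x n₀) (x n₀)).det
      ≤ (k • S + M).det * (1 + k * ψ (y n₀ * ⟪w, x n₀⟫) * ((x n₀).ofLp ⬝ᵥ (x n₀).ofLp)) :=
        det_add_smul_vecMulVec_self_le hP (mul_nonneg hk (hψ _).1) _
    _ ≤ (k • S + M).det * (1 + k * c) := by
        rw [mul_assoc k]
        gcongr
        exact hP_posDef.det_pos.le
    _ ≤ _ := by
        gcongr
        exact det_le_det_add_smul_vecMulVec_self hP_posDef (mul_nonneg hk (hψ _).1) _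

lemma exp_mul_det_ratio_le_exp {c : ℝ} (hφ : ∀ z, |φ z| ≤ 1) (hψ : ∀ z, 0 ≤ ψ z ∧ ψ z ≤ c)
    {k α : ℝ} (hk : 0 ≤ k) (hα : 0 ≤ α) (hM : (M - 1).PosSemidef)
    (hagree : ∀ n ≠ n₀, xh n = x n ∧ yh n = y n) (hx : ‖x n₀‖ ≤ 1) (hxh : ‖xh n₀‖ ≤ 1)
    (hy : |y n₀| ≤ 1) (hyh : |yh n₀| ≤ 1) (w r : EuclideanSpace ℝ m) :
    Real.exp (α * (‖-(k • empiricalGradient φ xh yh w) - r‖ -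
        ‖-(k • empiricalGradient φ x y w) - r‖)) *
      ((k • empiricalHessian ψ x y w + M).det / (k • empiricalHessian ψ xh yh w + M).det) ≤
      Real.exp (k * (c + 2 * α)) := by
  have norm_le : ‖-(k • empiricalGradient φ xh yh w) - r‖ - ‖-(k • empiricalGradient φ x y w) - r‖ ≤
      k * 2 := by
    refine (norm_sub_norm_le _ _).trans ?_
    rw [sub_sub_sub_cancel_right, neg_sub_neg, ← smul_sub, norm_smul, Real.norm_of_nonneg hk]
    gcongr
    exact norm_empiricalGradient_sub_le_two hφ hagree hx hxh hy hyh w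
  have det_pos (x : ι → EuclideanSpace ℝ m) (y : ι → ℝ) :
      0 < (k • empiricalHessian ψ x y w + M).det :=
    det_smul_empiricalHessian_add_pos (fun z => (hψ z).1) hk hM x y w
  have det_ratio_le : (k • empiricalHessian ψ x y w + M).det /
      (k • empiricalHessian ψ xh yh w + M).det ≤ Real.exp (k * c) := by
    rw [div_le_iff₀' (det_pos xh yh)]
    refine (det_smul_empiricalHessian_add_le hψ hk hM hagree hx w).trans ?_
    gcongr
    · exact (det_pos xh yh).le
    · simpa only [add_comm] using Real.add_one_le_exp (k * c)
  calc _ ≤ Real.exp (α * (k * 2)) * Real.exp (k * c) :=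
        mul_le_mul (Real.exp_le_exp.mpr (mul_le_mul_of_nonneg_left norm_le hα)) det_ratio_le
          (div_pos (det_pos x y) (det_pos xh yh)).le (Real.exp_nonneg _)
    _ = Real.exp (k * (c + 2 * α)) := by rw [← Real.exp_add]; ring_nf

end EmpiricalLoss

lemma prod_exp_mul_div_le_exp_sum {ι : Type*} {s : Finset ι} {a p q b : ι → ℝ}
    (hp : ∀ i ∈ s, 0 < p i) (hq : ∀ i ∈ s, 0 < q i)
    (h : ∀ i ∈ s, Real.exp (a i) * (p i / q i) ≤ Real.exp (b i)) :
    ∏ i ∈ s, Real.exp (a i) * (p i / q i) ≤ Real.exp (∑ i ∈ s, b i) := by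
  rw [Real.exp_sum]
  exact Finset.prod_le_prod
    (fun i hi => mul_nonneg (Real.exp_nonneg _) (div_pos (hp i hi) (hq i hi)).le) h

theorem penalty_perturbation_density_ratio_bound_general
    {m : Type*} [Fintype m] [DecidableEq m] {C ρ : ℝ} (hC : 0 ≤ C) (hρ : 0 ≤ ρ)
    {B V N : ℕ} (hV : 1 ≤ V) (hN : 1 ≤ N) {c : ℝ} {T : ℕ} {η α : ℕ → ℝ}
    (hη : ∀ t ∈ Finset.Icc 1 T, 0 < η t) (hα : ∀ t ∈ Finset.Icc 1 T, 0 ≤ α t)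
    {L L' L'' : ℝ → ℝ}
    (hL' : ∀ z, HasDerivAt L (L' z) z) (hL'' : ∀ z, HasDerivAt L' (L'' z) z)
    (hL'bd : ∀ z, |L' z| ≤ 1) (hL''bd : ∀ z, 0 ≤ L'' z ∧ L'' z ≤ c)
    {R : EuclideanSpace ℝ m → ℝ} {gradR : EuclideanSpace ℝ m → EuclideanSpace ℝ m}
    (hgradR : ∀ f, HasGradientAt R (gradR f) f)
    {hessR : EuclideanSpace ℝ m → Matrix m m ℝ}
    (hhessR : ∀ f, HasFDerivAt gradR
      (LinearMap.toContinuousLinearMap (Matrix.toEuclideanLin (hessR f))) f)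
    (hhessR_psd : ∀ f, (hessR f).PosSemidef)
    {x xh : Fin B → EuclideanSpace ℝ m} {y yh : Fin B → ℝ} {n₀ : Fin B}
    (hagree : ∀ n ≠ n₀, xh n = x n ∧ yh n = y n)
    (hx : ‖x n₀‖ ≤ 1) (hxh : ‖xh n₀‖ ≤ 1)
    (hy : ∀ n, y n = -1 ∨ y n = 1) (hyh : ∀ n, yh n = -1 ∨ yh n = 1)
    {f lam : ℕ → EuclideanSpace ℝ m} {g : ℕ → Fin V → EuclideanSpace ℝ m}
    {ε εh : ℕ → EuclideanSpace ℝ m} {H Hh : ℕ → Matrix m m ℝ}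
    (hε : ∀ t ∈ Finset.Icc 1 T, ε t =
      -((C / (2 * η t * V * B)) • empiricalGradient L' x y (f t))
      - (1 / (2 * η t * V)) • ((ρ / N) • gradR (f t) + (2 : ℝ) • lam (t - 1))
      - (1 / (2 * V : ℝ)) • ∑ j, ((2 : ℝ) • f t - f (t - 1) - g (t - 1) j))
    (hεh : ∀ t ∈ Finset.Icc 1 T, εh t =
      -((C / (2 * η t * V * B)) • empiricalGradient L' xh yh (f t))
      - (1 / (2 * η t * V)) • ((ρ / N) • gradR (f t) + (2 : ℝ) • lam (t - 1))
      - (1 / (2 * V : ℝ)) • ∑ j, ((2 : ℝ) • f t - f (t - 1) - g (t - 1) j))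
    (hH : ∀ t ∈ Finset.Icc 1 T, H t =
      (C / (2 * η t * V * B)) • empiricalHessian L'' x y (f t)
        + (ρ / (2 * η t * V * N)) • hessR (f t) + 1)
    (hHh : ∀ t ∈ Finset.Icc 1 T, Hh t =
      (C / (2 * η t * V * B)) • empiricalHessian L'' xh yh (f t)
        + (ρ / (2 * η t * V * N)) • hessR (f t) + 1) :
    (∀ t ∈ Finset.Icc 1 T, 0 < (H t).det ∧ 0 < (Hh t).det) ∧
    ∏ t ∈ Finset.Icc 1 T, Real.exp (α t * (‖εh t‖ - ‖ε t‖)) * ((H t).det / (Hh t).det) ≤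
      Real.exp (∑ t ∈ Finset.Icc 1 T, C * (c / 2 + α t) / (η t * V * B)) := by
  have abs_label {a : ℝ} (ha : a = -1 ∨ a = 1) : |a| ≤ 1 := by
    rcases ha with rfl | rfl <;> simp only [abs_neg, abs_one, le_refl]
  have weight_nonneg : ∀ t ∈ Finset.Icc 1 T, 0 ≤ C / (2 * η t * V * B) := fun t ht => by
    have := hη t ht
    positivity
  have common_psd : ∀ t ∈ Finset.Icc 1 T,
      ((ρ / (2 * η t * V * N)) • hessR (f t) + 1 - 1).PosSemidef := fun t ht => by
    have := hη t ht
    rw [add_sub_cancel_right]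
    exact (hhessR_psd (f t)).smul (by positivity)
  have det_pos : ∀ t ∈ Finset.Icc 1 T, 0 < (H t).det ∧ 0 < (Hh t).det := fun t ht => by
    rw [hH t ht, hHh t ht, add_assoc, add_assoc]
    have hpos := det_smul_empiricalHessian_add_pos (ι := Fin B) (fun z => (hL''bd z).1)
      (weight_nonneg t ht) (common_psd t ht)
    exact ⟨hpos x y (f t), hpos xh yh (f t)⟩
  refine ⟨det_pos, prod_exp_mul_div_le_exp_sum (fun t ht => (det_pos t ht).1)
    (fun t ht => (det_pos t ht).2) fun t ht => ?_⟩
  have exponent_eq : C * (c / 2 + α t) / (η t * V * B) =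
      C / (2 * η t * V * B) * (c + 2 * α t) := by ring
  rw [hε t ht, hεh t ht, hH t ht, hHh t ht, exponent_eq, sub_sub, sub_sub, add_assoc, add_assoc]
  exact exp_mul_det_ratio_le_exp hL'bd hL''bd (weight_nonneg t ht) (hα t ht) (common_psd t ht)
    hagree hx hxh (abs_label (hy n₀)) (abs_label (hyh n₀)) (f t) _

/-- Core density-ratio bound for the penalty-perturbation method: over `T` iterations, the product
of per-iteration noise-density ratios and Jacobian-determinant ratios under two neighboring
datasets is bounded by `exp(Σ_t C(1.4c₁ + α_t)/(η_t V B))`. -/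
theorem penalty_perturbation_density_ratio_bound
    (d : ℕ) (C ρ : ℝ) (hC : 0 < C) (hρ : 0 < ρ)
    (B V N : ℕ) (hB : 1 ≤ B) (hV : 1 ≤ V) (hN : 1 ≤ N)
    (c₁ θ : ℝ) (hc₁ : 0 < c₁) (hθ : 0 < θ)
    (hcond : 2 * c₁ < ((B : ℝ) / C) * (ρ / (N : ℝ) + 2 * θ * (V : ℝ)))
    (T : ℕ) (η α : ℕ → ℝ)
    (hη : ∀ t ∈ Finset.Icc 1 T, θ ≤ η t) (hα : ∀ t ∈ Finset.Icc 1 T, 0 ≤ α t)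
    (L L' L'' : ℝ → ℝ)
    (hL' : ∀ z, HasDerivAt L (L' z) z) (hL'' : ∀ z, HasDerivAt L' (L'' z) z)
    (hL'bd : ∀ z, |L' z| ≤ 1) (hL''bd : ∀ z, 0 < L'' z ∧ L'' z ≤ c₁)
    (R : EuclideanSpace ℝ (Fin d) → ℝ) (hR : ContDiff ℝ 2 R)
    (gradR : EuclideanSpace ℝ (Fin d) → EuclideanSpace ℝ (Fin d))
    (hgradR : ∀ f, HasGradientAt R (gradR f) f)
    (hessR : EuclideanSpace ℝ (Fin d) → Matrix (Fin d) (Fin d) ℝ)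
    (hhessR : ∀ f, HasFDerivAt gradR
      (LinearMap.toContinuousLinearMap (Matrix.toEuclideanLin (hessR f))) f)
    (hhessRI : ∀ f, ((hessR f) - 1).PosSemidef)
    (x xh : Fin B → EuclideanSpace ℝ (Fin d)) (y yh : Fin B → ℝ)
    (hagree : ∀ n : Fin B, (n : ℕ) ≠ 0 → xh n = x n ∧ yh n = y n)
    (hx : ∀ n, ‖x n‖ ≤ 1) (hxh : ∀ n, ‖xh n‖ ≤ 1)
    (hy : ∀ n, y n = -1 ∨ y n = 1) (hyh : ∀ n, yh n = -1 ∨ yh n = 1)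
    (f lam : ℕ → EuclideanSpace ℝ (Fin d)) (g : ℕ → Fin V → EuclideanSpace ℝ (Fin d))
    (ε εh : ℕ → EuclideanSpace ℝ (Fin d)) (H Hh : ℕ → Matrix (Fin d) (Fin d) ℝ)
    (hε : ∀ t ∈ Finset.Icc 1 T, ε t =
      -((C / (2 * η t * (V : ℝ) * (B : ℝ))) • ∑ n, (y n * L' (y n * ⟪f t, x n⟫)) • x n)
      - (1 / (2 * η t * (V : ℝ))) • ((ρ / (N : ℝ)) • gradR (f t) + (2 : ℝ) • lam (t - 1))
      - (1 / (2 * (V : ℝ))) • ∑ j, ((2 : ℝ) • f t - f (t - 1) - g (t - 1) j))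
    (hεh : ∀ t ∈ Finset.Icc 1 T, εh t =
      -((C / (2 * η t * (V : ℝ) * (B : ℝ))) • ∑ n, (yh n * L' (yh n * ⟪f t, xh n⟫)) • xh n)
      - (1 / (2 * η t * (V : ℝ))) • ((ρ / (N : ℝ)) • gradR (f t) + (2 : ℝ) • lam (t - 1))
      - (1 / (2 * (V : ℝ))) • ∑ j, ((2 : ℝ) • f t - f (t - 1) - g (t - 1) j))
    (hH : ∀ t ∈ Finset.Icc 1 T, H t =
      (C / (2 * η t * (V : ℝ) * (B : ℝ))) •
          ∑ n, L'' (y n * ⟪f t, x n⟫) • Matrix.of (fun i j => x n i * x n j)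
        + (ρ / (2 * η t * (V : ℝ) * (N : ℝ))) • hessR (f t) + 1)
    (hHh : ∀ t ∈ Finset.Icc 1 T, Hh t =
      (C / (2 * η t * (V : ℝ) * (B : ℝ))) •
          ∑ n, L'' (yh n * ⟪f t, xh n⟫) • Matrix.of (fun i j => xh n i * xh n j)
        + (ρ / (2 * η t * (V : ℝ) * (N : ℝ))) • hessR (f t) + 1) :
    (∀ t ∈ Finset.Icc 1 T, 0 < (H t).det ∧ 0 < (Hh t).det) ∧
    ∏ t ∈ Finset.Icc 1 T, Real.exp (α t * (‖εh t‖ - ‖ε t‖)) * ((H t).det / (Hh t).det) ≤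
      Real.exp (∑ t ∈ Finset.Icc 1 T, C * (1.4 * c₁ + α t) / (η t * (V : ℝ) * (B : ℝ))) := by
  have hη_pos : ∀ t ∈ Finset.Icc 1 T, 0 < η t := fun t ht => hθ.trans_le (hη t ht)
  obtain ⟨det_pos, prod_le⟩ := penalty_perturbation_density_ratio_bound_general hC.le hρ.le hV hN
    hη_pos hα hL' hL'' hL'bd (fun z => ⟨(hL''bd z).1.le, (hL''bd z).2⟩) hgradR hhessR
    (fun f => (posDef_of_posSemidef_sub_one (hhessRI f)).posSemidef) (n₀ := ⟨0, hB⟩)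
    (fun n hn => hagree n fun h => hn (Fin.ext h)) (hx _) (hxh _) hy hyh hε hεh hH hHh
  refine ⟨det_pos, prod_le.trans (Real.exp_le_exp.mpr (Finset.sum_le_sum fun t ht => ?_))⟩
  have := hη_pos t ht
  gcongr
  linarith
end

section
/- Let H, G ∈ ℝ^{d×d} be symmetric with H ⪰ h·I for some h > 0, G of rank at most 2 with −c·I ⪯ G ⪯ c·I for some c satisfying 0 ≤ c ≤ h/2. Then H and H + G are invertible with positive determinants, and det(H) / det(H + G) ≤ (1 − c/h)^{−2} ≤ exp(2.8·c/h). -/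
open scoped Matrix

/-!
Write `H = Bᴴ * B` and `G = Bᴴ * M * B`. Then `G ⪰ -c • 1 ⪰ -(c / h) • H` says that
`M ⪰ -(c / h) • 1`, and `det (H + G) = det H * det (1 + M)`. The determinant of `1 + M` is the product of `1 + μ` over
the eigenvalues `μ` of `M`, of which at most `rank G` differ from zero, so it is at least
`(1 - c / h) ^ rank G`. The exponential bound is Bernoulli's inequality
`(1 / 2) ^ (2 * x) ≤ 1 - x`.
-/

section Scalar

lemma inv_one_sub_le_four_rpow {x : ℝ} (hx₀ : 0 ≤ x) (hx : x ≤ 1 / 2) : (1 - x)⁻¹ ≤ 4 ^ x := by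
  have bernoulli : (1 / 2 : ℝ) ^ (2 * x) ≤ 1 - x := by
    calc (1 / 2 : ℝ) ^ (2 * x) = (1 + -1 / 2) ^ (2 * x) := by norm_num
      _ ≤ 1 + 2 * x * (-1 / 2) :=
        rpow_one_add_le_one_add_mul_self (by norm_num) (by linarith) (by linarith)
      _ = 1 - x := by ring
  have half_rpow : (1 / 2 : ℝ) ^ (2 * x) = (4 ^ x)⁻¹ := by
    rw [Real.rpow_mul (by norm_num), ← Real.inv_rpow (by norm_num)]
    norm_num
  exact inv_le_of_inv_le₀ (by positivity) (half_rpow ▸ bernoulli)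

lemma inv_one_sub_pow_le_exp {x : ℝ} (hx₀ : 0 ≤ x) (hx : x ≤ 1 / 2) (r : ℕ) :
    ((1 - x)⁻¹) ^ r ≤ Real.exp (1.4 * r * x) := by
  have log_four_le : Real.log 4 ≤ 1.4 := by
    rw [show (4 : ℝ) = 2 ^ 2 by norm_num, Real.log_pow]
    push_cast
    linarith [Real.log_two_lt_d9]
  have inv_le_exp : (1 - x)⁻¹ ≤ Real.exp (1.4 * x) := by
    calc (1 - x)⁻¹ ≤ 4 ^ x := inv_one_sub_le_four_rpow hx₀ hx
      _ = Real.exp (Real.log 4 * x) := Real.rpow_def_of_pos (by norm_num) x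
      _ ≤ Real.exp (1.4 * x) := by gcongr
  calc ((1 - x)⁻¹) ^ r ≤ Real.exp (1.4 * x) ^ r :=
        pow_le_pow_left₀ (inv_nonneg.2 (by linarith)) inv_le_exp r
    _ = Real.exp (1.4 * r * x) := by rw [← Real.exp_nat_mul]; ring_nf

end Scalar

section Determinant

open Matrix
open scoped ComplexOrder

variable {𝕜 n : Type*} [RCLike 𝕜] {H G M : Matrix n n 𝕜} {h c t : ℝ} {r : ℕ}

lemma posDef_add_of_posSemidef_add_smul (hH : H.PosDef) (hG : (G + t • H).PosSemidef)
    (ht : t < 1) : (H + G).PosDef := by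
  have split : H + G = (1 - t) • H + (G + t • H) := by module
  rw [split]
  exact (hH.smul (sub_pos.2 ht)).add_posSemidef hG

variable [DecidableEq n]

lemma posDef_of_posSemidef_sub_smul_one (hh : 0 < h)
    (hH : (H - h • (1 : Matrix n n 𝕜)).PosSemidef) : H.PosDef := by
  simpa using ((PosDef.one (n := n) (R := 𝕜)).smul hh).add_posSemidef hH

lemma posSemidef_add_div_smul (hh : 0 < h) (hH : (H - h • (1 : Matrix n n 𝕜)).PosSemidef)
    (hG : (G + c • (1 : Matrix n n 𝕜)).PosSemidef) (hc₀ : 0 ≤ c) :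
    (G + (c / h) • H).PosSemidef := by
  have cancel : G + (c / h) • H = G + c • (1 : Matrix n n 𝕜) + (c / h) • (H - h • 1) := by
    rw [smul_sub, smul_smul, div_mul_cancel₀ _ hh.ne']
    abel
  rw [cancel]
  exact hG.add (hH.smul (div_nonneg hc₀ hh.le))

lemma isHermitian_of_posSemidef_add_smul_one
    (hM : (M + t • (1 : Matrix n n 𝕜)).PosSemidef) : M.IsHermitian := by
  have smul_one : (t • (1 : Matrix n n 𝕜)).IsHermitian := by
    simp [IsHermitian, conjTranspose_smul]
  simpa only [add_sub_cancel_right] using hM.isHermitian.sub smul_one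

variable [Fintype n]

open scoped MatrixOrder in
lemma neg_le_eigenvalues_of_posSemidef_add_smul_one (hM : M.IsHermitian)
    (hMt : (M + t • (1 : Matrix n n 𝕜)).PosSemidef) (i : n) : -t ≤ hM.eigenvalues i := by
  have loewner : algebraMap ℝ (Matrix n n 𝕜) (-t) ≤ M := by
    rw [le_iff, Algebra.algebraMap_eq_smul_one, neg_smul, sub_neg_eq_add]
    exact hMt
  exact (algebraMap_le_iff_le_spectrum hM.isSelfAdjoint).1 loewner _
    (hM.eigenvalues_mem_spectrum_real i)

lemma det_one_add_eq_prod_eigenvalues (hM : M.IsHermitian) :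
    (1 + M).det = ((∏ i, (1 + hM.eigenvalues i) : ℝ) : 𝕜) := by
  have diagonalization : 1 + M = Unitary.conjStarAlgAut 𝕜 _ hM.eigenvectorUnitary
      (1 + diagonal (RCLike.ofReal ∘ hM.eigenvalues)) := by
    rw [map_add, map_one, ← hM.spectral_theorem]
  rw [diagonalization, det_map, ← diagonal_one, diagonal_add, det_diagonal]
  simp

lemma one_sub_pow_le_det_one_add (hr : M.rank ≤ r)
    (hM : (M + t • (1 : Matrix n n 𝕜)).PosSemidef) (ht₀ : 0 ≤ t) (ht₁ : t ≤ 1) :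
    (((1 - t) ^ r : ℝ) : 𝕜) ≤ (1 + M).det := by
  have hermitian := isHermitian_of_posSemidef_add_smul_one hM
  let nonzero := Finset.univ.filter fun i => hermitian.eigenvalues i ≠ 0
  have card_nonzero : nonzero.card ≤ r := by
    rwa [hermitian.rank_eq_card_non_zero_eigs, Fintype.card_subtype] at hr
  rw [det_one_add_eq_prod_eigenvalues hermitian, RCLike.ofReal_le_ofReal]
  calc (1 - t) ^ r ≤ (1 - t) ^ nonzero.card :=
        pow_le_pow_of_le_one (by linarith) (by linarith) card_nonzero
    _ ≤ ∏ i ∈ nonzero, (1 + hermitian.eigenvalues i) := by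
        rw [← Finset.prod_const]
        exact Finset.prod_le_prod (fun _ _ => by linarith) fun i _ => by
          linarith [neg_le_eigenvalues_of_posSemidef_add_smul_one hermitian hM i]
    _ = ∏ i, (1 + hermitian.eigenvalues i) :=
        Finset.prod_filter_of_ne fun i _ hi => by simpa using hi

lemma one_sub_pow_mul_det_le_det_add (hH : H.PosDef) (hr : G.rank ≤ r)
    (hG : (G + t • H).PosSemidef) (ht₀ : 0 ≤ t) (ht₁ : t ≤ 1) :
    (((1 - t) ^ r : ℝ) : 𝕜) * H.det ≤ (H + G).det := by
  obtain ⟨B, hB, rfl⟩ : ∃ B : Matrix n n 𝕜, IsUnit B ∧ H = star B * B := by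
    open scoped MatrixOrder Matrix.Norms.L2Operator in
    exact CStarAlgebra.isStrictlyPositive_iff_eq_star_mul_self.1 hH.isStrictlyPositive
  obtain ⟨M, rfl⟩ : ∃ M, G = star B * M * B := by
    refine ⟨star B⁻¹ * G * B⁻¹, ?_⟩
    have inv_mul : B⁻¹ * B = 1 := nonsing_inv_mul B ((isUnit_iff_isUnit_det B).1 hB)
    calc G = star (B⁻¹ * B) * G * (B⁻¹ * B) := by simp only [inv_mul, star_one, one_mul, mul_one]
      _ = star B * (star B⁻¹ * G * B⁻¹) * B := by simp only [star_mul, mul_assoc]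
  have rank_le : M.rank ≤ r := by
    rwa [rank_mul_eq_left_of_isUnit_det _ _ ((isUnit_iff_isUnit_det B).1 hB),
      rank_mul_eq_right_of_isUnit_det _ _ ((isUnit_iff_isUnit_det _).1 hB.star)] at hr
  have posSemidef : (M + t • (1 : Matrix n n 𝕜)).PosSemidef := by
    rw [← IsUnit.posSemidef_star_left_conjugate_iff hB]
    simpa [mul_add, add_mul] using hG
  have det_add : (star B * B + star B * M * B).det = (1 + M).det * (star B * B).det := by
    rw [show star B * B + star B * M * B = star B * (1 + M) * B by noncomm_ring]
    simp only [det_mul]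
    ring
  rw [det_add]
  exact mul_le_mul_of_nonneg_right (one_sub_pow_le_det_one_add rank_le posSemidef ht₀ ht₁)
    hH.det_pos.le

lemma det_div_det_add_le (hH : H.PosDef) (hr : G.rank ≤ r) (hG : (G + t • H).PosSemidef)
    (ht₀ : 0 ≤ t) (ht₁ : t < 1) :
    H.det / (H + G).det ≤ ((((1 - t)⁻¹) ^ r : ℝ) : 𝕜) := by
  have factor_pos : (0 : 𝕜) < (((1 - t) ^ r : ℝ) : 𝕜) := by
    exact_mod_cast pow_pos (sub_pos.2 ht₁) r
  rw [inv_pow, RCLike.ofReal_inv,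
    div_le_iff₀ (posDef_add_of_posSemidef_add_smul hH hG ht₁).det_pos, le_inv_mul_iff₀ factor_pos]
  exact one_sub_pow_mul_det_le_det_add hH hr hG ht₀ ht₁.le

theorem det_ratio_bound_general (hH : (H - h • (1 : Matrix n n 𝕜)).PosSemidef)
    (hGrank : G.rank ≤ r) (hG : (G + c • (1 : Matrix n n 𝕜)).PosSemidef)
    (hc₀ : 0 ≤ c) (hch : c < h) :
    0 < H.det ∧ 0 < (H + G).det ∧
      H.det / (H + G).det ≤ ((((1 - c / h)⁻¹) ^ r : ℝ) : 𝕜) ∧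
      (c ≤ h / 2 → ((1 - c / h)⁻¹) ^ r ≤ Real.exp (1.4 * r * (c / h))) := by
  have hh : 0 < h := hc₀.trans_lt hch
  have ratio_nonneg : 0 ≤ c / h := div_nonneg hc₀ hh.le
  have ratio_lt_one : c / h < 1 := (div_lt_one hh).2 hch
  have hHpos : H.PosDef := posDef_of_posSemidef_sub_smul_one hh hH
  have hGH : (G + (c / h) • H).PosSemidef := posSemidef_add_div_smul hh hH hG hc₀
  exact ⟨hHpos.det_pos, (posDef_add_of_posSemidef_add_smul hHpos hGH ratio_lt_one).det_pos,
    det_div_det_add_le hHpos hGrank hGH ratio_nonneg ratio_lt_one,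
    fun hch' => inv_one_sub_pow_le_exp ratio_nonneg ((div_le_iff₀ hh).2 (by linarith)) r⟩

end Determinant

/-- Jacobian-determinant ratio bound: if `H ⪰ h·I` with `h > 0`, and `G` is symmetric of rank at
most 2 with `-c·I ⪯ G ⪯ c·I` and `0 ≤ c ≤ h/2`, then `H` and `H + G` are invertible with
positive determinants and `det(H)/det(H+G) ≤ (1 - c/h)⁻² ≤ exp(2.8·c/h)`. -/
theorem det_ratio_bound (d : ℕ) (H G : Matrix (Fin d) (Fin d) ℝ)
    (hHsymm : Hᵀ = H) (hGsymm : Gᵀ = G) (h c : ℝ) (hh : 0 < h)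
    (hH : (H - h • (1 : Matrix (Fin d) (Fin d) ℝ)).PosSemidef)
    (hGrank : G.rank ≤ 2)
    (hGu : (c • (1 : Matrix (Fin d) (Fin d) ℝ) - G).PosSemidef)
    (hGl : (G + c • (1 : Matrix (Fin d) (Fin d) ℝ)).PosSemidef)
    (hc0 : 0 ≤ c) (hch : c ≤ h / 2) :
    0 < H.det ∧ 0 < (H + G).det ∧
      H.det / (H + G).det ≤ ((1 - c / h)⁻¹) ^ 2 ∧
      ((1 - c / h)⁻¹) ^ 2 ≤ Real.exp (2.8 * (c / h)) := by
  obtain ⟨det_pos, det_add_pos, ratio_le, pow_le⟩ :=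
    det_ratio_bound_general hH hGrank hGl hc0 (hch.trans_lt (half_lt_self hh))
  exact ⟨det_pos, det_add_pos, ratio_le, (pow_le hch).trans_eq (by norm_num)⟩
end

section
/- Let O : ℝ^d → ℝ be convex and continuously differentiable, let η > 0, let V be a positive integer, and let λ, c_1,…,c_V ∈ ℝ^d. For ε ∈ ℝ^d define L_ε : ℝ^d → ℝ by L_ε(f) = O(f) + 2·λᵀf + η·Σ_{j=1}^V ‖f + ε − c_j‖₂². Then: (1) for every ε ∈ ℝ^d, L_ε is strictly convex and has a unique minimizer g(ε) ∈ ℝ^d; and (2) the map g : ℝ^d → ℝ^d is a bijection, whose inverse is given explicitly by f ↦ −(1/(2ηV))·(∇O(f) + 2λ) − f + (1/V)·Σ_{j=1}^V c_j. -/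
open scoped RealInnerProductSpace BigOperators

/-!
The perturbed objective `L_ε` is a convex function plus `ηV‖·‖²` plus an affine function, so it is
`2ηV`-strongly convex. A differentiable strongly convex function on a Banach space has exactly one
critical point, its strict minimizer, which exists because minimizing sequences are Cauchy. Since
`∇L_ε(f) = 2ηV • (ε - noiseOfOutput f)`, the equation `∇L_ε(f) = 0` reads `noiseOfOutput f = ε`; its
unique solvability for every `ε` says that `noiseOfOutput` is a bijection whose inverse sends `ε`
to the minimizer of `L_ε`.
-/

section StrongConvexity

open Filter Topology

variable {E : Type*} [NormedAddCommGroup E] [NormedSpace ℝ E] {s : Set E} {f : E → ℝ} {m : ℝ}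

theorem add_lineDeriv_add_sq_le_of_strongConvexOn (hf : StrongConvexOn s m f) {x y : E}
    (hx : x ∈ s) (hy : y ∈ s) {f' : ℝ} (hf' : HasLineDerivAt ℝ f f' x (y - x)) :
    f x + f' + m / 2 * ‖y - x‖ ^ 2 ≤ f y := by
  have difference_quotient_le : ∀ᶠ t in 𝓝[>] (0 : ℝ),
      t⁻¹ • (f (x + t • (y - x)) - f x) ≤ f y - f x - (1 - t) * (m / 2 * ‖y - x‖ ^ 2) := by
    filter_upwards [Ioo_mem_nhdsGT (zero_lt_one' ℝ)] with t ⟨ht0, ht1⟩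
    have convexity := hf.2 hy hx ht0.le (sub_nonneg.2 ht1.le) (add_sub_cancel t 1)
    rw [show t • y + (1 - t) • x = x + t • (y - x) by module] at convexity
    simp only [smul_eq_mul] at convexity ⊢
    rw [inv_mul_le_iff₀ ht0]
    linarith
  have bound_tendsto : Tendsto (fun t : ℝ ↦ f y - f x - (1 - t) * (m / 2 * ‖y - x‖ ^ 2))
      (𝓝[>] 0) (𝓝 (f y - f x - (1 - 0) * (m / 2 * ‖y - x‖ ^ 2))) :=
    (Continuous.tendsto (by fun_prop) 0).mono_left nhdsWithin_le_nhds
  have := le_of_tendsto_of_tendsto hf'.tendsto_slope_zero_right bound_tendsto difference_quotient_le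
  linarith

theorem lt_of_strongConvexOn_of_hasFDerivAt_zero (hf : StrongConvexOn s m f) (hm : 0 < m)
    {x y : E} (hx : x ∈ s) (hy : y ∈ s) (hxy : y ≠ x)
    (hf' : HasFDerivAt f (0 : StrongDual ℝ E) x) : f x < f y := by
  have growth := add_lineDeriv_add_sq_le_of_strongConvexOn hf hx hy (hf'.hasLineDerivAt (y - x))
  have : 0 < ‖y - x‖ := norm_pos_iff.2 (sub_ne_zero.2 hxy)
  have : 0 < m / 2 * ‖y - x‖ ^ 2 := by positivity
  simp only [zero_apply] at growth
  linarith

theorem bddBelow_image_of_strongConvexOn (hf : StrongConvexOn s m f) (hm : 0 < m) {x : E}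
    (hx : x ∈ s) {f' : StrongDual ℝ E} (hf' : HasFDerivAt f f' x) : BddBelow (f '' s) := by
  refine ⟨f x - ‖f'‖ ^ 2 / (2 * m), Set.forall_mem_image.2 fun y hy ↦ ?_⟩
  have growth := add_lineDeriv_add_sq_le_of_strongConvexOn hf hx hy (hf'.hasLineDerivAt (y - x))
  have linear_bound : -(‖f'‖ * ‖y - x‖) ≤ f' (y - x) :=
    neg_le_of_abs_le (f'.le_opNorm (y - x))
  have completed_square : m / 2 * ‖y - x‖ ^ 2 - ‖f'‖ * ‖y - x‖ + ‖f'‖ ^ 2 / (2 * m)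
      = (m * ‖y - x‖ - ‖f'‖) ^ 2 / (2 * m) := by
    field_simp
    ring
  have : 0 ≤ (m * ‖y - x‖ - ‖f'‖) ^ 2 / (2 * m) := by positivity
  linarith

theorem cauchySeq_of_strongConvexOn (hf : StrongConvexOn s m f) (hm : 0 < m)
    {β : Type*} [Nonempty β] [SemilatticeSup β] {u : β → E} (hu : ∀ n, u n ∈ s) {I : ℝ}
    (hI : I ∈ lowerBounds (f '' s)) (hlim : Tendsto (fun n ↦ f (u n)) atTop (𝓝 I)) :
    CauchySeq u := by
  have dist_le (p : β × β) :
      dist (u p.1) (u p.2) ≤ √(4 / m * ((f (u p.1) - I) + (f (u p.2) - I))) := by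
    have convexity := hf.2 (hu p.1) (hu p.2) one_half_pos.le one_half_pos.le (add_halves 1)
    have := hI (Set.mem_image_of_mem f
      (hf.1 (hu p.1) (hu p.2) one_half_pos.le one_half_pos.le (add_halves 1)))
    apply Real.le_sqrt_of_sq_le
    rw [dist_eq_norm, div_mul_eq_mul_div, le_div_iff₀ hm]
    simp only [smul_eq_mul] at convexity
    linarith
  rw [cauchySeq_iff_tendsto_dist_atTop_0]
  refine squeeze_zero (fun _ ↦ dist_nonneg) dist_le ?_
  rw [← prod_atTop_atTop_eq]
  have gap_tendsto := hlim.sub_const I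
  simpa using (((gap_tendsto.comp tendsto_fst).add (gap_tendsto.comp tendsto_snd)).const_mul
    (4 / m)).sqrt

theorem exists_isMinOn_of_strongConvexOn [CompleteSpace E] (hf : StrongConvexOn s m f)
    (hm : 0 < m) (hs : IsClosed s) (hne : s.Nonempty) (hfs : LowerSemicontinuousOn f s)
    (hbdd : BddBelow (f '' s)) : ∃ x ∈ s, IsMinOn f s x := by
  have hI : IsGLB (f '' s) (sInf (f '' s)) := isGLB_csInf (hne.image f) hbdd
  obtain ⟨v, -, hv, hvs⟩ := exists_seq_tendsto_sInf (hne.image f) hbdd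
  choose u hus huv using hvs
  obtain rfl : (fun n ↦ f (u n)) = v := funext huv
  obtain ⟨x, hx⟩ := cauchySeq_tendsto_of_complete (cauchySeq_of_strongConvexOn hf hm hus hI.1 hv)
  have hxs : x ∈ s := hs.mem_of_tendsto hx (.of_forall hus)
  have hux : Tendsto u atTop (𝓝[s] x) := tendsto_nhdsWithin_iff.2 ⟨hx, .of_forall hus⟩
  have le_inf : f x ≤ sInf (f '' s) := le_of_forall_lt_imp_le_of_dense fun y hy ↦
    ge_of_tendsto hv ((hux.eventually (hfs x hxs y hy)).mono fun _ ↦ le_of_lt)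
  exact ⟨x, hxs, fun y hy ↦ le_inf.trans (hI.1 (Set.mem_image_of_mem f hy))⟩

theorem exists_hasFDerivAt_zero_of_strongConvexOn [CompleteSpace E]
    (hf : StrongConvexOn Set.univ m f) (hm : 0 < m) (hd : Differentiable ℝ f) :
    ∃ x, HasFDerivAt f (0 : StrongDual ℝ E) x := by
  obtain ⟨x, -, hx⟩ := exists_isMinOn_of_strongConvexOn hf hm isClosed_univ Set.univ_nonempty
    (hd.continuous.lowerSemicontinuous.lowerSemicontinuousOn _)
    (bddBelow_image_of_strongConvexOn hf hm (Set.mem_univ 0) (hd 0).hasFDerivAt)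
  have hmin : IsLocalMin f x := hx.isLocalMin univ_mem
  exact ⟨x, hmin.fderiv_eq_zero ▸ (hd x).hasFDerivAt⟩

end StrongConvexity

section PerturbedLagrangian

variable {E ι : Type*} [NormedAddCommGroup E] [InnerProductSpace ℝ E] [Fintype ι]
  {O : E → ℝ} {gradO : E → E} {η : ℝ}

/-- The objective `L_ε(f)` of one node's ADMM primal update with noise `ε`: the node has objective
`O`, dual variable `lam`, penalty `η`, and one consensus midpoint `c j` per neighbor `j : ι`. -/
def perturbedLagrangian (O : E → ℝ) (η : ℝ) (lam : E) (c : ι → E) (ε f : E) : ℝ :=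
  O f + 2 * ⟪lam, f⟫ + η * ∑ j, ‖f + ε - c j‖ ^ 2

/-- The noise for which the output `f` is the critical point of `perturbedLagrangian`, obtained by
solving the first-order condition for the noise; `gradO` stands for the gradient of `O`. -/
noncomputable def noiseOfOutput (gradO : E → E) (η : ℝ) (lam : E) (c : ι → E) (f : E) : E :=
  -((1 / (2 * η * Fintype.card ι)) • (gradO f + (2 : ℝ) • lam)) - f
    + (1 / (Fintype.card ι : ℝ)) • ∑ j, c j

theorem perturbedLagrangian_eq (lam : E) (c : ι → E) (ε f : E) :
    perturbedLagrangian O η lam c ε f =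
      O f + ⟪(2 : ℝ) • lam + (2 * η) • ∑ j, (ε - c j), f⟫ + η * ∑ j, ‖ε - c j‖ ^ 2
        + 2 * η * Fintype.card ι / 2 * ‖f‖ ^ 2 := by
  simp only [perturbedLagrangian, add_sub_assoc, norm_add_sq_real, Finset.sum_add_distrib,
    Finset.sum_const, Finset.card_univ, nsmul_eq_mul, ← Finset.mul_sum, ← inner_sum,
    real_inner_comm f]
  simp only [inner_add_right, real_inner_smul_right]
  ring

theorem strongConvexOn_perturbedLagrangian {s : Set E} (hO : ConvexOn ℝ s O) (lam : E)
    (c : ι → E) (ε : E) :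
    StrongConvexOn s (2 * η * Fintype.card ι) (perturbedLagrangian O η lam c ε) := by
  rw [strongConvexOn_iff_convex]
  simp only [perturbedLagrangian_eq, add_sub_cancel_right]
  exact (hO.add ((innerₗ E _).convexOn hO.1)).add_const _

theorem hasGradientAt_perturbedLagrangian [CompleteSpace E] [Nonempty ι] (hη : η ≠ 0) {f : E}
    (hO : HasGradientAt O (gradO f) f) (lam : E) (c : ι → E) (ε : E) :
    HasGradientAt (perturbedLagrangian O η lam c ε)
      ((2 * η * Fintype.card ι) • (ε - noiseOfOutput gradO η lam c f)) f := by
  have gradient_eq : (2 * η * Fintype.card ι) • (ε - noiseOfOutput gradO η lam c f) =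
      gradO f + ((2 : ℝ) • lam + (2 * η) • ∑ j, (ε - c j)) + (2 * η * Fintype.card ι) • f := by
    simp only [noiseOfOutput, Finset.sum_sub_distrib, Finset.sum_const, Finset.card_univ,
      ← Nat.cast_smul_eq_nsmul ℝ]
    match_scalars <;> field_simp
  rw [gradient_eq, hasGradientAt_iff_hasFDerivAt, funext (perturbedLagrangian_eq lam c ε)]
  have hasFDerivAt_sum := ((hO.hasFDerivAt.add
    (innerSL ℝ ((2 : ℝ) • lam + (2 * η) • ∑ j, (ε - c j))).hasFDerivAt).add_const
      (η * ∑ j, ‖ε - c j‖ ^ 2)).add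
    ((hasStrictFDerivAt_norm_sq f).hasFDerivAt.const_mul (2 * η * Fintype.card ι / 2))
  refine hasFDerivAt_sum.congr_fderiv ?_
  ext v
  simp
  ring

theorem hasFDerivAt_perturbedLagrangian_zero_iff [CompleteSpace E] [Nonempty ι] (hη : η ≠ 0)
    {f : E} (hO : HasGradientAt O (gradO f) f) (lam : E) (c : ι → E) (ε : E) :
    HasFDerivAt (perturbedLagrangian O η lam c ε) (0 : StrongDual ℝ E) f ↔
      noiseOfOutput gradO η lam c f = ε := by
  have hgrad := hasGradientAt_perturbedLagrangian hη hO lam c ε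
  have hscale : 2 * η * Fintype.card ι ≠ 0 := by simp [hη]
  rw [hasFDerivAt_iff_hasGradientAt, map_zero]
  constructor
  · intro hzero
    exact (sub_eq_zero.1 ((smul_eq_zero_iff_right hscale).1 (hgrad.unique hzero))).symm
  · rintro rfl
    simpa using hgrad

theorem noise_to_output_bijective_general [CompleteSpace E] [Nonempty ι]
    (hOconv : ConvexOn ℝ Set.univ O) (hgrad : ∀ f, HasGradientAt O (gradO f) f) (hη : 0 < η)
    (lam : E) (c : ι → E) :
    (∀ ε, StrictConvexOn ℝ Set.univ (perturbedLagrangian O η lam c ε)) ∧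
    ∃ g : E → E,
      (∀ ε f, f ≠ g ε →
        perturbedLagrangian O η lam c ε (g ε) < perturbedLagrangian O η lam c ε f) ∧
      Function.Bijective g ∧
      Function.LeftInverse (noiseOfOutput gradO η lam c) g ∧
      Function.RightInverse (noiseOfOutput gradO η lam c) g := by
  have hm : 0 < 2 * η * Fintype.card ι := by positivity
  have hconv (ε : E) := strongConvexOn_perturbedLagrangian (η := η) hOconv lam c ε
  have critical_iff (ε f : E) :=
    hasFDerivAt_perturbedLagrangian_zero_iff hη.ne' (hgrad f) lam c ε
  have strict_min {ε x f : E} (hx : noiseOfOutput gradO η lam c x = ε) (hf : f ≠ x) :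
      perturbedLagrangian O η lam c ε x < perturbedLagrangian O η lam c ε f :=
    lt_of_strongConvexOn_of_hasFDerivAt_zero (hconv ε) hm (Set.mem_univ x) (Set.mem_univ f) hf
      ((critical_iff ε x).2 hx)
  have noise_injective : Function.Injective (noiseOfOutput gradO η lam c) := fun x y hxy ↦ by
    by_contra hne
    exact (strict_min hxy (Ne.symm hne)).asymm (strict_min rfl hne)
  have noise_surjective : Function.Surjective (noiseOfOutput gradO η lam c) := fun ε ↦
    (exists_hasFDerivAt_zero_of_strongConvexOn (hconv ε) hm fun f ↦
      (hasGradientAt_perturbedLagrangian hη.ne' (hgrad f) lam c ε).differentiableAt).imp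
      fun x hx ↦ (critical_iff ε x).1 hx
  let e := Equiv.ofBijective _ ⟨noise_injective, noise_surjective⟩
  exact ⟨fun ε ↦ (hconv ε).strictConvexOn hm, e.symm,
    fun ε f hf ↦ strict_min (e.apply_symm_apply ε) hf, e.symm.bijective,
    e.apply_symm_apply, e.symm_apply_apply⟩

end PerturbedLagrangian

/-- The penalty-perturbed primal update `L_ε(f) = O(f) + 2λᵀf + η·Σⱼ ‖f + ε - cⱼ‖²` is strictly
convex with a unique minimizer `g(ε)` for every noise `ε`, and the noise-to-output map `g` is a
bijection whose inverse is `f ↦ -(1/(2ηV))(∇O(f) + 2λ) - f + (1/V)·Σⱼ cⱼ`. -/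
theorem noise_to_output_bijective (d V : ℕ) (hV : 0 < V)
    (O : EuclideanSpace ℝ (Fin d) → ℝ) (gradO : EuclideanSpace ℝ (Fin d) → EuclideanSpace ℝ (Fin d))
    (hOconv : ConvexOn ℝ Set.univ O) (hOdiff : ContDiff ℝ 1 O)
    (hgrad : ∀ f, HasGradientAt O (gradO f) f)
    (η : ℝ) (hη : 0 < η) (lam : EuclideanSpace ℝ (Fin d)) (c : Fin V → EuclideanSpace ℝ (Fin d)) :
    let L : EuclideanSpace ℝ (Fin d) → EuclideanSpace ℝ (Fin d) → ℝ := fun ε f =>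
      O f + 2 * ⟪lam, f⟫ + η * ∑ j, ‖f + ε - c j‖ ^ 2
    let inv : EuclideanSpace ℝ (Fin d) → EuclideanSpace ℝ (Fin d) := fun f =>
      -((1 / (2 * η * V)) • (gradO f + (2 : ℝ) • lam)) - f + (1 / (V : ℝ)) • ∑ j, c j
    (∀ ε, StrictConvexOn ℝ Set.univ (L ε)) ∧
    ∃ g : EuclideanSpace ℝ (Fin d) → EuclideanSpace ℝ (Fin d),
      (∀ ε f, f ≠ g ε → L ε (g ε) < L ε f) ∧
      Function.Bijective g ∧
      Function.LeftInverse inv g ∧ Function.RightInverse inv g := by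
  have : Nonempty (Fin V) := Fin.pos_iff_nonempty.1 hV
  have bijective := noise_to_output_bijective_general hOconv hgrad hη lam c
  unfold perturbedLagrangian noiseOfOutput at bijective
  simpa only [Fintype.card_fin] using bijective
end
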